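/- arXiv:1007.4455 — 2 statements merged into one kernel-verified Lean document; each statement's English description precedes it below -/
import Mathlib

section
/- Let A generate an α-times resolvent family {S_α(t)}_{t≥0} on X, where 1 < α < 2, and let P_α(t)x = ∫_0^t g_{α−1}(t−s)S_α(s)x ds. Then for every x ∈ X and every t ≥ 0, the element ∫_0^t g_α(t−s) s P_α(s)x ds belongs to D(A) and A(∫_0^t g_α(t−s) s P_α(s)x ds) = −α (g_α*S_α)(t)x + t P_α(t)x, where (g_α*S_α)(t)x = ∫_0^t g_α(t−s)S_α(s)x ds. -/
open MeasureTheory Set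

/-- `g β t = t^(β-1)/Γ(β)`. -/
noncomputable def g (β t : ℝ) : ℝ := t ^ (β - 1) / Real.Gamma β

/-- `Pa α S t x = (g_{α-1} * S)(t) x = ∫_0^t g_{α-1}(t-s) S(s) x ds`. -/
noncomputable def Pa {X : Type*} [NormedAddCommGroup X] [NormedSpace ℂ X]
    (α : ℝ) (S : ℝ → X →L[ℂ] X) (t : ℝ) (x : X) : X :=
  ∫ s in (0:ℝ)..t, g (α - 1) (t - s) • S s x

/-!
Write `I^β` for convolution with `g_β`. The beta integral gives `g_β * g_γ = g_{β+γ}`, hence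
`I^β I^γ = I^{β+γ}` by Fubini on a triangle. Since `u g_β(u) = β g_{β+1}(u)`, multiplication by the
variable satisfies `I^β (s f) = t I^β f - β I^{β+1} f`, so that with `P = I^{α-1} S x`
`I^α (s P) = t I^{2α-1} S x - α I^{2α} S x`.
For `x` in the domain, `A I^α S x = S x - x` is the resolvent equation; closedness of `A` and
density of its domain extend it to all `x`, and integrating once more gives
`A I^{β+α} S x = I^β S x - g_{β+1} x`. Taking `β = α - 1` and `β = α`, the two terms in `x` cancel
because `t g_α(t) = α g_{α+1}(t)`.
-/

theorem g_nonneg {β u : ℝ} (hβ : 0 < β) (hu : 0 ≤ u) : 0 ≤ g β u :=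
  div_nonneg (Real.rpow_nonneg hu _) (Real.Gamma_pos_of_pos hβ).le

theorem g_pos {β u : ℝ} (hβ : 0 < β) (hu : 0 < u) : 0 < g β u :=
  div_pos (Real.rpow_pos_of_pos hu _) (Real.Gamma_pos_of_pos hβ)

@[fun_prop]
theorem measurable_g (β : ℝ) : Measurable (g β) := by
  unfold g
  fun_prop

theorem mul_g {β u : ℝ} (hβ : 0 < β) (hu : 0 ≤ u) : u * g β u = β * g (β + 1) u := by
  have hrpow : u ^ β = u * u ^ (β - 1) := by
    rw [← Real.rpow_one_add' hu (by linarith), add_sub_cancel]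
  have hΓ := (Real.Gamma_pos_of_pos hβ).ne'
  simp only [g, Real.Gamma_add_one hβ.ne', add_sub_cancel_right, hrpow]
  field_simp

theorem intervalIntegrable_g_sub {β : ℝ} (hβ : 0 < β) (a b t : ℝ) :
    IntervalIntegrable (fun s ↦ g β (t - s)) volume a b := by
  have hrpow : IntervalIntegrable (fun u : ℝ ↦ u ^ (β - 1)) volume (t - a) (t - b) :=
    intervalIntegral.intervalIntegrable_rpow' (by linarith)
  simpa only [g, sub_sub_cancel] using (hrpow.div_const (Real.Gamma β)).comp_sub_left t

theorem integral_g_sub {β : ℝ} (hβ : 0 < β) (t : ℝ) :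
    ∫ s in (0 : ℝ)..t, g β (t - s) = g (β + 1) t := by
  rw [intervalIntegral.integral_comp_sub_left (g β) t]
  simp only [g, sub_self, sub_zero, intervalIntegral.integral_div, add_sub_cancel_right]
  rw [integral_rpow (.inl (by linarith)), sub_add_cancel, Real.zero_rpow hβ.ne',
    Real.Gamma_add_one hβ.ne', sub_zero, div_div]

theorem integral_rpow_mul_sub_rpow {β γ a : ℝ} (hβ : 0 < β) (hγ : 0 < γ) (ha : 0 < a) :
    ∫ u in (0 : ℝ)..a, u ^ (β - 1) * (a - u) ^ (γ - 1) =
      a ^ (β + γ - 1) * ProbabilityTheory.beta β γ := by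
  have hcast : ∫ u in (0 : ℝ)..a, (u : ℂ) ^ ((β : ℂ) - 1) * ((a : ℂ) - u) ^ ((γ : ℂ) - 1) =
      ∫ u in (0 : ℝ)..a, ((u ^ (β - 1) * (a - u) ^ (γ - 1) : ℝ) : ℂ) := by
    refine intervalIntegral.integral_congr fun u hu ↦ ?_
    rw [uIcc_of_le ha.le] at hu
    push_cast [Complex.ofReal_cpow hu.1, Complex.ofReal_cpow (sub_nonneg.2 hu.2)]
    rfl
  have hbeta := Complex.betaIntegral_scaled (β : ℂ) (γ : ℂ) ha
  rw [Complex.betaIntegral_eq_Gamma_mul_div _ _ (by simpa) (by simpa), hcast,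
    intervalIntegral.integral_ofReal] at hbeta
  apply Complex.ofReal_injective
  rw [hbeta, ProbabilityTheory.beta]
  push_cast [Complex.ofReal_cpow ha.le, ← Complex.Gamma_ofReal]
  rfl

theorem integral_g_mul_g {β γ r t : ℝ} (hβ : 0 < β) (hγ : 0 < γ) (hrt : r < t) :
    ∫ s in r..t, g β (t - s) * g γ (s - r) = g (β + γ) (t - r) := by
  have hΓβ := (Real.Gamma_pos_of_pos hβ).ne'
  have hΓγ := (Real.Gamma_pos_of_pos hγ).ne'
  calc ∫ s in r..t, g β (t - s) * g γ (s - r)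
      = ∫ u in (0 : ℝ)..t - r, g β (t - r - u) * g γ u := by
        simpa using intervalIntegral.integral_comp_sub_right
          (fun u ↦ g β (t - r - u) * g γ u) r (a := r) (b := t)
    _ = ∫ u in (0 : ℝ)..t - r, u ^ (γ - 1) * (t - r - u) ^ (β - 1) /
          (Real.Gamma γ * Real.Gamma β) := by
        congr 1 with u
        rw [g, g, div_mul_div_comm, mul_comm, mul_comm (Real.Gamma β)]
    _ = g (β + γ) (t - r) := by
        rw [intervalIntegral.integral_div, integral_rpow_mul_sub_rpow hγ hβ (sub_pos.2 hrt), g,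
          ProbabilityTheory.beta, add_comm γ]
        field_simp

theorem intervalIntegrable_g_mul_g {β γ r t : ℝ} (hβ : 0 < β) (hγ : 0 < γ) (hrt : r < t) :
    IntervalIntegrable (fun s ↦ g β (t - s) * g γ (s - r)) volume r t := by
  refine intervalIntegral.intervalIntegrable_of_integral_ne_zero ?_
  rw [integral_g_mul_g hβ hγ hrt]
  exact (g_pos (add_pos hβ hγ) (sub_pos.2 hrt)).ne'

section LowerTriangle

/-- The half-plane `r < s` of points `(s, r)`. Iterated integrals over a triangle are written as
iterated integrals over a square of a function cut off to it. -/
def lowerTriangle : Set (ℝ × ℝ) := {p | p.2 < p.1}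

theorem measurableSet_lowerTriangle : MeasurableSet lowerTriangle :=
  measurableSet_lt measurable_snd measurable_fst

variable {E : Type*} [NormedAddCommGroup E] {a b r s : ℝ} {F : ℝ → ℝ → E}

theorem indicator_lowerTriangle_fst (F : ℝ → ℝ → E) (r : ℝ) :
    (fun s ↦ lowerTriangle.indicator F.uncurry (s, r)) = (Ioi r).indicator (F · r) :=
  rfl

theorem indicator_lowerTriangle_snd (F : ℝ → ℝ → E) (s : ℝ) :
    (fun r ↦ lowerTriangle.indicator F.uncurry (s, r)) = (Iio s).indicator (F s) :=
  rfl

theorem integrableOn_indicator_lowerTriangle_fst (hr : r ∈ Ioc a b)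
    (hF : IntervalIntegrable (F · r) volume r b) :
    IntegrableOn (fun s ↦ lowerTriangle.indicator F.uncurry (s, r)) (Ioc a b) := by
  rw [indicator_lowerTriangle_fst, integrableOn_indicator_iff measurableSet_Ioi, inter_comm,
    Ioc_inter_Ioi, sup_of_le_right hr.1.le]
  exact hF.1

theorem setIntegral_indicator_lowerTriangle_fst [NormedSpace ℝ E] (hr : r ∈ Ioc a b) :
    ∫ s in Ioc a b, lowerTriangle.indicator F.uncurry (s, r) = ∫ s in r..b, F s r := by
  rw [indicator_lowerTriangle_fst, setIntegral_indicator measurableSet_Ioi, Ioc_inter_Ioi,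
    sup_of_le_right hr.1.le, intervalIntegral.integral_of_le hr.2]

theorem integrable_indicator_lowerTriangle (hab : a ≤ b)
    (hmeas : AEStronglyMeasurable F.uncurry
      ((volume.restrict (Ioc a b)).prod (volume.restrict (Ioc a b))))
    (hF : ∀ r ∈ Ioo a b, IntervalIntegrable (F · r) volume r b)
    (hnorm : IntervalIntegrable (fun r ↦ ∫ s in r..b, ‖F s r‖) volume a b) :
    Integrable (lowerTriangle.indicator F.uncurry)
      ((volume.restrict (Ioc a b)).prod (volume.restrict (Ioc a b))) := by
  refine (integrable_prod_iff' (hmeas.indicator measurableSet_lowerTriangle)).2 ⟨?_, ?_⟩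
  · rw [← restrict_Ioo_eq_restrict_Ioc (a := a) (b := b)]
    filter_upwards [ae_restrict_mem measurableSet_Ioo] with r hr
    rw [restrict_Ioo_eq_restrict_Ioc]
    exact integrableOn_indicator_lowerTriangle_fst (Ioo_subset_Ioc_self hr) (hF r hr)
  · refine ((intervalIntegrable_iff_integrableOn_Ioc_of_le hab).1 hnorm).congr_fun
      (fun r hr ↦ ?_) measurableSet_Ioc
    simp only [norm_indicator_eq_indicator_norm]
    exact (setIntegral_indicator_lowerTriangle_fst (F := fun s r ↦ ‖F s r‖) hr).symm

variable [NormedSpace ℝ E]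

theorem setIntegral_indicator_lowerTriangle_snd (hs : s ∈ Ioc a b) :
    ∫ r in Ioc a b, lowerTriangle.indicator F.uncurry (s, r) = ∫ r in a..s, F s r := by
  have hinter : Ioc a b ∩ Iio s = Ioo a s := by
    ext r
    exact ⟨fun h ↦ ⟨h.1.1, h.2⟩, fun h ↦ ⟨⟨h.1, h.2.le.trans hs.2⟩, h.2⟩⟩
  rw [indicator_lowerTriangle_snd, setIntegral_indicator measurableSet_Iio, hinter,
    ← integral_Ioc_eq_integral_Ioo, intervalIntegral.integral_of_le hs.1.le]

theorem intervalIntegrable_integral_of_lowerTriangle (hab : a ≤ b)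
    (hF : Integrable (lowerTriangle.indicator F.uncurry)
      ((volume.restrict (Ioc a b)).prod (volume.restrict (Ioc a b)))) :
    IntervalIntegrable (fun s ↦ ∫ r in a..s, F s r) volume a b := by
  rw [intervalIntegrable_iff_integrableOn_Ioc_of_le hab]
  exact IntegrableOn.congr_fun hF.integral_prod_left
    (fun _ hs ↦ setIntegral_indicator_lowerTriangle_snd hs) measurableSet_Ioc

theorem integral_integral_swap_of_lowerTriangle (hab : a ≤ b)
    (hF : Integrable (lowerTriangle.indicator F.uncurry)
      ((volume.restrict (Ioc a b)).prod (volume.restrict (Ioc a b)))) :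
    ∫ s in a..b, ∫ r in a..s, F s r = ∫ r in a..b, ∫ s in r..b, F s r := by
  rw [intervalIntegral.integral_of_le hab, intervalIntegral.integral_of_le hab,
    ← setIntegral_congr_fun measurableSet_Ioc
      fun s hs ↦ setIntegral_indicator_lowerTriangle_snd (F := F) hs,
    ← setIntegral_congr_fun measurableSet_Ioc
      fun r hr ↦ setIntegral_indicator_lowerTriangle_fst (F := F) hr]
  exact integral_integral_swap (f := fun s r ↦ lowerTriangle.indicator F.uncurry (s, r)) hF

end LowerTriangle

section FractionalIntegral

variable {E : Type*} [NormedAddCommGroup E] [NormedSpace ℝ E] {β γ t : ℝ} {f h : ℝ → E}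

/-- The Riemann–Liouville fractional integral `g_β * f` of order `β` based at `0`. It has the
Bochner integral's value `0` where the integrand is not integrable. -/
noncomputable def fractionalIntegral (β : ℝ) (f : ℝ → E) (t : ℝ) : E :=
  ∫ s in (0 : ℝ)..t, g β (t - s) • f s

theorem intervalIntegrable_g_sub_smul (hβ : 0 < β) (hf : ContinuousOn f (Icc 0 t)) (ht : 0 ≤ t) :
    IntervalIntegrable (fun s ↦ g β (t - s) • f s) volume 0 t :=
  (intervalIntegrable_g_sub hβ 0 t t).smul_continuousOn (by rwa [uIcc_of_le ht])

theorem fractionalIntegral_sub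
    (hf : IntervalIntegrable (fun s ↦ g β (t - s) • f s) volume 0 t)
    (hh : IntervalIntegrable (fun s ↦ g β (t - s) • h s) volume 0 t) :
    fractionalIntegral β (fun s ↦ f s - h s) t =
      fractionalIntegral β f t - fractionalIntegral β h t := by
  simp only [fractionalIntegral, smul_sub]
  exact intervalIntegral.integral_sub hf hh

theorem fractionalIntegral_const [CompleteSpace E] (hβ : 0 < β) (x : E) (t : ℝ) :
    fractionalIntegral β (fun _ ↦ x) t = g (β + 1) t • x := by
  rw [fractionalIntegral, intervalIntegral.integral_smul_const, integral_g_sub hβ]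

theorem norm_fractionalIntegral_le {C : ℝ} (hβ : 0 < β) (ht : 0 ≤ t)
    (hf : ∀ s ∈ Ioc 0 t, ‖f s‖ ≤ C) :
    ‖fractionalIntegral β f t‖ ≤ g (β + 1) t * C := by
  rw [← integral_g_sub hβ, ← intervalIntegral.integral_mul_const]
  refine intervalIntegral.norm_integral_le_of_norm_le ht (.of_forall fun s hs ↦ ?_)
    ((intervalIntegrable_g_sub hβ 0 t t).mul_const C)
  have hg : 0 ≤ g β (t - s) := g_nonneg hβ (sub_nonneg.2 hs.2)
  rw [norm_smul, Real.norm_of_nonneg hg]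
  exact mul_le_mul_of_nonneg_left (hf s hs) hg

theorem intervalIntegrable_g_add_one_sub_smul (hβ : 0 < β) (ht : 0 ≤ t)
    (hf : IntervalIntegrable (fun s ↦ g β (t - s) • f s) volume 0 t) :
    IntervalIntegrable (fun s ↦ g (β + 1) (t - s) • f s) volume 0 t := by
  have hweight : IntervalIntegrable (fun s ↦ ((t - s) / β) • g β (t - s) • f s) volume 0 t :=
    hf.continuousOn_smul (by fun_prop)
  refine hweight.congr_uIoo fun s hs ↦ ?_
  rw [uIoo_of_le ht] at hs
  simp only [smul_smul, div_mul_eq_mul_div, mul_g hβ (sub_nonneg.2 hs.2.le),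
    mul_div_cancel_left₀ _ hβ.ne']

theorem fractionalIntegral_id_smul (hβ : 0 < β) (ht : 0 ≤ t)
    (hf : IntervalIntegrable (fun s ↦ g β (t - s) • f s) volume 0 t) :
    fractionalIntegral β (fun s ↦ s • f s) t =
      t • fractionalIntegral β f t - β • fractionalIntegral (β + 1) f t := by
  simp only [fractionalIntegral, ← intervalIntegral.integral_smul]
  refine (intervalIntegral.integral_congr fun s hs ↦ ?_).trans (intervalIntegral.integral_sub
    (hf.smul t) ((intervalIntegrable_g_add_one_sub_smul hβ ht hf).smul β))
  rw [uIcc_of_le ht] at hs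
  simp only [smul_smul, ← mul_g hβ (sub_nonneg.2 hs.2), ← sub_smul]
  congr 1
  ring

theorem fractionalIntegral_prodMk {F : Type*} [NormedAddCommGroup F] [NormedSpace ℝ F]
    [CompleteSpace E] [CompleteSpace F] {k : ℝ → F} (ht : 0 ≤ t)
    (hf : IntervalIntegrable (fun s ↦ g β (t - s) • f s) volume 0 t)
    (hk : IntervalIntegrable (fun s ↦ g β (t - s) • k s) volume 0 t) :
    fractionalIntegral β (fun s ↦ (f s, k s)) t =
      (fractionalIntegral β f t, fractionalIntegral β k t) := by
  simp only [fractionalIntegral, intervalIntegral.integral_of_le ht, Prod.smul_mk]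
  exact integral_pair hf.1 hk.1

theorem integral_mem_of_isClosed [CompleteSpace E] {Ω : Type*} [MeasurableSpace Ω]
    {μ : Measure Ω} {K : Submodule ℝ E} (hK : IsClosed (K : Set E)) {f : Ω → E}
    (hf : ∀ᵐ ω ∂μ, f ω ∈ K) : ∫ ω, f ω ∂μ ∈ K := by
  by_cases hint : Integrable f μ
  · have hzero : ∫ ω, K.mkQL (f ω) ∂μ = 0 := integral_eq_zero_of_ae <| by
      filter_upwards [hf] with ω hω using (Submodule.Quotient.mk_eq_zero K).2 hω
    rw [K.mkQL.integral_comp_comm hint] at hzero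
    exact (Submodule.Quotient.mk_eq_zero K).1 hzero
  · rw [integral_undef hint]
    exact K.zero_mem

theorem fractionalIntegral_mem_of_isClosed [CompleteSpace E] {K : Submodule ℝ E}
    (hK : IsClosed (K : Set E)) (ht : 0 ≤ t) (hf : ∀ s ∈ Ioc 0 t, f s ∈ K) :
    fractionalIntegral β f t ∈ K := by
  rw [fractionalIntegral, intervalIntegral.integral_of_le ht]
  refine integral_mem_of_isClosed hK ?_
  filter_upwards [ae_restrict_mem measurableSet_Ioc] with s hs using K.smul_mem _ (hf s hs)

theorem aestronglyMeasurable_of_g_sub_smul (hβ : 0 < β)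
    (hf : IntervalIntegrable (fun s ↦ g β (t - s) • f s) volume 0 t) :
    AEStronglyMeasurable f (volume.restrict (Ioc 0 t)) := by
  have hinv : Measurable fun s ↦ (g β (t - s))⁻¹ := by fun_prop
  refine (hinv.aestronglyMeasurable.smul hf.1.aestronglyMeasurable).congr ?_
  rw [← restrict_Ioo_eq_restrict_Ioc]
  filter_upwards [ae_restrict_mem measurableSet_Ioo] with s hs
  exact inv_smul_smul₀ (g_pos hβ (sub_pos.2 hs.2)).ne' (f s)

/-- The integrand of `g_β * (g_γ * f)` at `t`, as a function of the two integration variables. -/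
noncomputable def iteratedFractionalKernel (β γ t : ℝ) (f : ℝ → E) (s r : ℝ) : E :=
  (g β (t - s) * g γ (s - r)) • f r

theorem integral_norm_iteratedFractionalKernel (hβ : 0 < β) (hγ : 0 < γ) (f : ℝ → E)
    {r : ℝ} (hrt : r < t) :
    ∫ s in r..t, ‖iteratedFractionalKernel β γ t f s r‖ = ‖g (β + γ) (t - r) • f r‖ := by
  have hnonneg : 0 ≤ g (β + γ) (t - r) := g_nonneg (add_pos hβ hγ) (sub_nonneg.2 hrt.le)
  rw [norm_smul, Real.norm_of_nonneg hnonneg, ← integral_g_mul_g hβ hγ hrt,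
    ← intervalIntegral.integral_mul_const]
  refine intervalIntegral.integral_congr fun s hs ↦ ?_
  rw [uIcc_of_le hrt.le] at hs
  have hprod := mul_nonneg (g_nonneg hβ (sub_nonneg.2 hs.2)) (g_nonneg hγ (sub_nonneg.2 hs.1))
  simp only [iteratedFractionalKernel, norm_smul, Real.norm_of_nonneg hprod]

theorem integral_iteratedFractionalKernel_left [CompleteSpace E] (hβ : 0 < β) (hγ : 0 < γ)
    (f : ℝ → E) {r : ℝ} (hrt : r < t) :
    ∫ s in r..t, iteratedFractionalKernel β γ t f s r = g (β + γ) (t - r) • f r := by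
  simp only [iteratedFractionalKernel, intervalIntegral.integral_smul_const,
    integral_g_mul_g hβ hγ hrt]

theorem integral_iteratedFractionalKernel_right (β γ t : ℝ) (f : ℝ → E) (s : ℝ) :
    ∫ r in (0 : ℝ)..s, iteratedFractionalKernel β γ t f s r =
      g β (t - s) • fractionalIntegral γ f s := by
  simp only [iteratedFractionalKernel, mul_smul, intervalIntegral.integral_smul,
    fractionalIntegral]

theorem integrable_iteratedFractionalKernel (hβ : 0 < β) (hγ : 0 < γ) (ht : 0 ≤ t)
    (hf : IntervalIntegrable (fun r ↦ g (β + γ) (t - r) • f r) volume 0 t) :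
    Integrable (lowerTriangle.indicator (iteratedFractionalKernel β γ t f).uncurry)
      ((volume.restrict (Ioc 0 t)).prod (volume.restrict (Ioc 0 t))) := by
  refine integrable_indicator_lowerTriangle ht ?_ ?_ ?_
  · have hscalar : Measurable fun p : ℝ × ℝ ↦ g β (t - p.1) * g γ (p.1 - p.2) := by fun_prop
    exact hscalar.aestronglyMeasurable.smul
      (aestronglyMeasurable_of_g_sub_smul (add_pos hβ hγ) hf).comp_snd
  · exact fun r hr ↦ (intervalIntegrable_g_mul_g hβ hγ hr.2).smul_continuousOn
      continuousOn_const
  · refine hf.norm.congr_uIoo fun r hr ↦ ?_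
    rw [uIoo_of_le ht] at hr
    exact (integral_norm_iteratedFractionalKernel hβ hγ f hr.2).symm

theorem intervalIntegrable_g_sub_smul_fractionalIntegral (hβ : 0 < β) (hγ : 0 < γ) (ht : 0 ≤ t)
    (hf : IntervalIntegrable (fun r ↦ g (β + γ) (t - r) • f r) volume 0 t) :
    IntervalIntegrable (fun s ↦ g β (t - s) • fractionalIntegral γ f s) volume 0 t := by
  simp only [← integral_iteratedFractionalKernel_right]
  exact intervalIntegrable_integral_of_lowerTriangle ht
    (integrable_iteratedFractionalKernel hβ hγ ht hf)

theorem fractionalIntegral_fractionalIntegral [CompleteSpace E] (hβ : 0 < β) (hγ : 0 < γ)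
    (ht : 0 ≤ t) (hf : IntervalIntegrable (fun r ↦ g (β + γ) (t - r) • f r) volume 0 t) :
    fractionalIntegral β (fractionalIntegral γ f) t = fractionalIntegral (β + γ) f t := by
  calc fractionalIntegral β (fractionalIntegral γ f) t
      = ∫ s in (0 : ℝ)..t, ∫ r in (0 : ℝ)..s, iteratedFractionalKernel β γ t f s r := by
        simp only [integral_iteratedFractionalKernel_right, fractionalIntegral]
    _ = ∫ r in (0 : ℝ)..t, ∫ s in r..t, iteratedFractionalKernel β γ t f s r :=
        integral_integral_swap_of_lowerTriangle ht
          (integrable_iteratedFractionalKernel hβ hγ ht hf)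
    _ = fractionalIntegral (β + γ) f t :=
        intervalIntegral.integral_congr_Ioo_of_le ht fun r hr ↦
          integral_iteratedFractionalKernel_left hβ hγ f hr.2

theorem fractionalIntegral_id_smul_fractionalIntegral [CompleteSpace E] (hβ : 0 < β)
    (hγ : 0 < γ) (ht : 0 ≤ t)
    (hf : IntervalIntegrable (fun r ↦ g (β + γ) (t - r) • f r) volume 0 t) :
    fractionalIntegral β (fun s ↦ s • fractionalIntegral γ f s) t =
      t • fractionalIntegral (β + γ) f t - β • fractionalIntegral (β + γ + 1) f t := by
  have hf' := intervalIntegrable_g_add_one_sub_smul (add_pos hβ hγ) ht hf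
  rw [add_right_comm] at hf'
  rw [fractionalIntegral_id_smul hβ ht
      (intervalIntegrable_g_sub_smul_fractionalIntegral hβ hγ ht hf),
    fractionalIntegral_fractionalIntegral hβ hγ ht hf,
    fractionalIntegral_fractionalIntegral (by linarith) hγ ht hf', add_right_comm]

end FractionalIntegral

section StronglyContinuous

variable {𝕜 X Y : Type*} [NontriviallyNormedField 𝕜] [NormedAddCommGroup X] [NormedSpace 𝕜 X]
  [CompleteSpace X] [NormedAddCommGroup Y] [NormedSpace 𝕜 Y]

theorem exists_opNorm_bound_of_continuousOn {T : Type*} [TopologicalSpace T]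
    {S : T → X →L[𝕜] Y} {K : Set T} (hK : IsCompact K) (hS : ∀ x, ContinuousOn (S · x) K) :
    ∃ M, ∀ s ∈ K, ‖S s‖ ≤ M := by
  obtain ⟨M, hM⟩ := banach_steinhaus (g := fun s : K ↦ S s) fun x ↦
    (hK.exists_bound_of_continuousOn (hS x)).imp fun _ hC s ↦ hC s s.2
  exact ⟨M, fun s hs ↦ hM ⟨s, hs⟩⟩

theorem continuous_fractionalIntegral_apply [NormedSpace ℝ Y] {S : ℝ → X →L[𝕜] Y} {β t : ℝ}
    (hβ : 0 < β) (ht : 0 ≤ t) (hS : ∀ x, ContinuousOn (S · x) (Icc 0 t)) :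
    Continuous fun x ↦ fractionalIntegral β (S · x) t := by
  obtain ⟨M, hM⟩ := exists_opNorm_bound_of_continuousOn isCompact_Icc hS
  refine (LipschitzWith.of_dist_le' (K := g (β + 1) t * M) fun x z ↦ ?_).continuous
  rw [dist_eq_norm, dist_eq_norm, mul_assoc,
    ← fractionalIntegral_sub (intervalIntegrable_g_sub_smul hβ (hS x) ht)
      (intervalIntegrable_g_sub_smul hβ (hS z) ht)]
  refine norm_fractionalIntegral_le hβ ht fun s hs ↦ ?_
  rw [← map_sub]
  exact (S s).le_of_opNorm_le (hM s (Ioc_subset_Icc_self hs)) _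

end StronglyContinuous

/-- `S` is an `α`-times resolvent family generated by `A`: strongly continuous on `[0, ∞)`
with `S 0 = 1`, commuting with `A`, and satisfying `S t x = x + (g_α * S A x)(t)` on the domain of
`A`. A pair `(x, y)` in the graph stands for `x ∈ D(A)` with `A x = y`. -/
structure IsResolventFamily {𝕜 X : Type*} [RCLike 𝕜] [NormedAddCommGroup X] [NormedSpace 𝕜 X]
    [NormedSpace ℝ X] (α : ℝ) (A : X →ₗ.[𝕜] X) (S : ℝ → X →L[𝕜] X) : Prop where
  continuousOn : ∀ x, ContinuousOn (S · x) (Ici 0)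
  map_zero : S 0 = 1
  map_mem_graph : ∀ t, 0 ≤ t → ∀ x y, (x, y) ∈ A.graph → (S t x, S t y) ∈ A.graph
  eq_add_fractionalIntegral : ∀ t, 0 ≤ t → ∀ x y, (x, y) ∈ A.graph →
    S t x = x + fractionalIntegral α (S · y) t

namespace IsResolventFamily

variable {𝕜 X : Type*} [RCLike 𝕜] [NormedAddCommGroup X] [NormedSpace 𝕜 X] [NormedSpace ℝ X]
  {α β t : ℝ} {A : X →ₗ.[𝕜] X} {S : ℝ → X →L[𝕜] X}

theorem intervalIntegrable_g_sub_smul_apply (hS : IsResolventFamily α A S) (hβ : 0 < β)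
    (ht : 0 ≤ t) (x : X) : IntervalIntegrable (fun s ↦ g β (t - s) • S s x) volume 0 t :=
  intervalIntegrable_g_sub_smul hβ ((hS.continuousOn x).mono Icc_subset_Ici_self) ht

variable [IsScalarTower ℝ 𝕜 X] [CompleteSpace X]

theorem fractionalIntegral_mem_graph_of_mem_graph (hS : IsResolventFamily α A S)
    (hA : IsClosed (A.graph : Set (X × X))) (hβ : 0 < β) (ht : 0 ≤ t) {x y : X}
    (hxy : (x, y) ∈ A.graph) :
    (fractionalIntegral β (S · x) t, fractionalIntegral β (S · y) t) ∈ A.graph := by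
  rw [← fractionalIntegral_prodMk ht (hS.intervalIntegrable_g_sub_smul_apply hβ ht x)
    (hS.intervalIntegrable_g_sub_smul_apply hβ ht y)]
  exact fractionalIntegral_mem_of_isClosed (K := A.graph.restrictScalars ℝ) hA ht
    fun s hs ↦ hS.map_mem_graph s hs.1.le x y hxy

theorem fractionalIntegral_mem_graph (hS : IsResolventFamily α A S) (hα : 0 < α)
    (hA : IsClosed (A.graph : Set (X × X))) (hA_dense : Dense (A.domain : Set X)) (ht : 0 ≤ t)
    (x : X) : (fractionalIntegral α (S · x) t, S t x - x) ∈ A.graph := by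
  have hcont : Continuous fun x ↦ (fractionalIntegral α (S · x) t, S t x - x) :=
    (continuous_fractionalIntegral_apply hα ht
      fun z ↦ (hS.continuousOn z).mono Icc_subset_Ici_self).prodMk (by fun_prop)
  refine (hA.preimage hcont).closure_subset_iff.2 (fun z hz ↦ ?_) (hA_dense x)
  obtain ⟨y, hzy⟩ := LinearPMap.mem_domain_iff.1 hz
  have hmem := hS.fractionalIntegral_mem_graph_of_mem_graph hA hα ht hzy
  rwa [← sub_eq_of_eq_add' (hS.eq_add_fractionalIntegral t ht z y hzy)] at hmem

theorem fractionalIntegral_add_mem_graph (hS : IsResolventFamily α A S) (hα : 0 < α)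
    (hA : IsClosed (A.graph : Set (X × X))) (hA_dense : Dense (A.domain : Set X)) (hβ : 0 < β)
    (ht : 0 ≤ t) (x : X) :
    (fractionalIntegral (β + α) (S · x) t, fractionalIntegral β (S · x) t - g (β + 1) t • x)
      ∈ A.graph := by
  have hβα := hS.intervalIntegrable_g_sub_smul_apply (add_pos hβ hα) ht x
  have hSx := hS.intervalIntegrable_g_sub_smul_apply hβ ht x
  have hx := intervalIntegrable_g_sub_smul (f := fun _ ↦ x) hβ continuousOn_const ht
  have hdiff : IntervalIntegrable (fun s ↦ g β (t - s) • (S s x - x)) volume 0 t := by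
    simpa only [smul_sub] using hSx.sub hx
  rw [← fractionalIntegral_fractionalIntegral hβ hα ht hβα, ← fractionalIntegral_const hβ,
    ← fractionalIntegral_sub hSx hx, ← fractionalIntegral_prodMk ht
      (intervalIntegrable_g_sub_smul_fractionalIntegral hβ hα ht hβα) hdiff]
  exact fractionalIntegral_mem_of_isClosed (K := A.graph.restrictScalars ℝ) hA ht
    fun s hs ↦ hS.fractionalIntegral_mem_graph hα hA hA_dense hs.1.le x

end IsResolventFamily

theorem stmt_3_general {𝕜 X : Type*} [RCLike 𝕜] [NormedAddCommGroup X] [NormedSpace 𝕜 X]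
    [NormedSpace ℝ X] [IsScalarTower ℝ 𝕜 X] [CompleteSpace X] {α t : ℝ} {A : X →ₗ.[𝕜] X}
    {S : ℝ → X →L[𝕜] X} (hα : 1 < α) (hA_closed : IsClosed (A.graph : Set (X × X)))
    (hA_dense : Dense (A.domain : Set X)) (hS : IsResolventFamily α A S) (x : X) (ht : 0 ≤ t) :
    (fractionalIntegral α (fun s ↦ s • fractionalIntegral (α - 1) (S · x) s) t,
      (-α) • fractionalIntegral α (S · x) t + t • fractionalIntegral (α - 1) (S · x) t)
        ∈ A.graph := by
  have hα₀ : 0 < α := by linarith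
  have hα₁ : 0 < α - 1 := sub_pos.2 hα
  have hP := hS.fractionalIntegral_add_mem_graph hα₀ hA_closed hA_dense hα₁ ht x
  have hI := hS.fractionalIntegral_add_mem_graph hα₀ hA_closed hA_dense hα₀ ht x
  have hint := hS.intervalIntegrable_g_sub_smul_apply (add_pos hα₀ hα₁) ht x
  have hmem := A.graph.sub_mem (A.graph.smul_of_tower_mem t hP) (A.graph.smul_of_tower_mem α hI)
  rw [Prod.smul_mk, Prod.smul_mk, Prod.mk_sub_mk] at hmem
  have hcancel : t • g α t • x = α • g (α + 1) t • x := by simp only [smul_smul, mul_g hα₀ ht]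
  rw [add_comm (α - 1) α, show α + α = α + (α - 1) + 1 by ring,
    ← fractionalIntegral_id_smul_fractionalIntegral hα₀ hα₁ ht hint,
    sub_add_cancel, smul_sub, smul_sub, hcancel] at hmem
  convert hmem using 2
  rw [neg_smul]
  abel

theorem stmt_3
    {X : Type*} [NormedAddCommGroup X] [NormedSpace ℂ X] [CompleteSpace X]
    (α : ℝ) (hα1 : 1 < α) (hα2 : α < 2)
    (A : X →ₗ.[ℂ] X) (hA_closed : IsClosed (A.graph : Set (X × X)))
    (hA_dense : Dense (A.domain : Set X))
    (S : ℝ → X →L[ℂ] X)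
    (hS_cont : ∀ x : X, ContinuousOn (fun t => S t x) (Ici (0:ℝ)))
    (hS_zero : S 0 = 1)
    (hS_dom : ∀ t : ℝ, 0 ≤ t → ∀ x ∈ A.domain, S t x ∈ A.domain)
    (hS_comm : ∀ t : ℝ, 0 ≤ t → ∀ x y : X, (x, y) ∈ A.graph → (S t x, S t y) ∈ A.graph)
    (hS_eq : ∀ t : ℝ, 0 ≤ t → ∀ x y : X, (x, y) ∈ A.graph →
      S t x = x + ∫ s in (0:ℝ)..t, g α (t - s) • S s y)
    :
    ∀ (x : X) (t : ℝ), 0 ≤ t →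
      ((∫ s in (0:ℝ)..t, g α (t - s) • (s • Pa α S s x)),
        (-α) • (∫ s in (0:ℝ)..t, g α (t - s) • S s x) + t • Pa α S t x) ∈ A.graph :=
  fun x _ ht ↦ stmt_3_general hα1 hA_closed hA_dense ⟨hS_cont, hS_zero, hS_comm, hS_eq⟩ x ht
end

section
/- Let A generate an α-times resolvent family {S_α(t)}_{t≥0} on X, where 1 < α < 2, let r > 0, and suppose S_α(·) is of bounded semivariation on [0,r]. If f : [0,r] → X is continuous, then (P_α*f)(t) = ∫_0^t P_α(t−s)f(s) ds belongs to D(A) for every t ∈ [0,r], and the map t ↦ A((P_α*f)(t)) is continuous on [0,r]. -/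
open MeasureTheory Set

/-- `G` is of bounded semivariation on `[0, r]`: the quantities
`‖∑ (G(d_{i+1}) - G(d_i)) x_i‖` over all partitions `0 = d_0 < ⋯ < d_n = r`
and all vectors of norm at most one are uniformly bounded. -/
def BoundedSemivariation {X : Type*} [NormedAddCommGroup X] [NormedSpace ℂ X]
    (G : ℝ → X →L[ℂ] X) (r : ℝ) : Prop :=
  ∃ C : ℝ, ∀ (n : ℕ) (d : ℕ → ℝ) (x : ℕ → X),
    d 0 = 0 → d n = r → (∀ i < n, d i < d (i + 1)) → (∀ i, ‖x i‖ ≤ 1) →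
    ‖∑ i ∈ Finset.range n, (G (d (i + 1)) - G (d i)) (x i)‖ ≤ C

/-!
Since `1 * g_{α-1} = g_α`, the resolvent equation, extended from the dense domain by closedness of
`A`, gives `A ∫₀ᵗ P_α(s) x ds = S_α(t) x - x` for every `x`. Replacing `f(t - ·)` by step functions
in `(P_α * f)(t) = ∫₀ᵗ P_α(s) f(t - s) ds` therefore produces elements of `D(A)` whose images under
`A` are Riemann–Stieltjes sums of `∫₀ᵗ dS_α(s) f(t - s)`. Bounded semivariation of `S_α` and uniform
continuity of `f` make these sums converge uniformly in `t`, and the limit is `A (P_α * f)(t)`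
because `A` is closed.
-/

open Filter Topology

section CausalConvolution

variable {E : Type*} [NormedAddCommGroup E] [NormedSpace ℝ E] {k : ℝ → ℝ} {u : ℝ → E} {t : ℝ}

/-- The causal convolution `(k * u)(t) = ∫₀ᵗ k (t - s) u(s) ds` of a scalar kernel `k` with a
vector-valued function `u` on the half-line; `Pa α S t x` and the integral in the resolvent
equation are the cases `k = g (α - 1)` and `k = g α` with `u = S · x`. -/
noncomputable def causalConv (k : ℝ → ℝ) (u : ℝ → E) (t : ℝ) : E :=
  ∫ s in (0 : ℝ)..t, k (t - s) • u s

lemma intervalIntegrable_comp_sub_left_self (hk : IntervalIntegrable k volume 0 t) :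
    IntervalIntegrable (fun s => k (t - s)) volume 0 t := by
  simpa using (hk.comp_sub_left t).symm

lemma intervalIntegrable_causalConv_integrand (ht : 0 ≤ t) (hk : IntervalIntegrable k volume 0 t)
    (hu : ContinuousOn u (Icc 0 t)) :
    IntervalIntegrable (fun s => k (t - s) • u s) volume 0 t :=
  (intervalIntegrable_comp_sub_left_self hk).smul_continuousOn (by rwa [uIcc_of_le ht])

lemma norm_causalConv_le (ht : 0 ≤ t) (hk : IntervalIntegrable k volume 0 t) {M : ℝ}
    (hM : ∀ s ∈ Icc 0 t, ‖u s‖ ≤ M) :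
    ‖causalConv k u t‖ ≤ (∫ s in (0 : ℝ)..t, ‖k s‖) * M := by
  have hk' := (intervalIntegrable_comp_sub_left_self hk).norm
  calc ‖causalConv k u t‖
      ≤ ∫ s in (0 : ℝ)..t, ‖k (t - s)‖ * M := by
        refine intervalIntegral.norm_integral_le_of_norm_le ht (.of_forall fun s hs => ?_)
          (hk'.mul_const M)
        rw [norm_smul]
        gcongr
        exact hM s (Ioc_subset_Icc_self hs)
    _ = (∫ s in (0 : ℝ)..t, ‖k s‖) * M := by
        rw [intervalIntegral.integral_mul_const,
          intervalIntegral.integral_comp_sub_left (fun s => ‖k s‖), sub_self, sub_zero]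

-- Splitting off the constant `u 0` makes the remaining factor vanish on the negative half-line,
-- so that the variable endpoint of integration disappears.
lemma causalConv_eq_integral_add [CompleteSpace E] {r : ℝ} (hr : 0 ≤ r)
    (hk : IntervalIntegrable k volume 0 r) (hu : ContinuousOn u (Icc 0 r)) (ht : t ∈ Icc 0 r) :
    causalConv k u t =
      (∫ s in (0 : ℝ)..r, k s • (IccExtend hr ((Icc 0 r).domRestrict u) (t - s) - u 0))
        + (∫ s in (0 : ℝ)..t, k s) • u 0 := by
  set U : ℝ → E := IccExtend hr ((Icc 0 r).domRestrict u)
  have hU : Continuous U := (continuousOn_iff_continuous_domRestrict.1 hu).Icc_extend'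
  have hU_pos : ∀ s ∈ Icc 0 t, U (t - s) = u (t - s) := fun s hs =>
    IccExtend_of_mem hr _ ⟨by linarith [hs.2], by linarith [hs.1, ht.2]⟩
  have hU_neg : ∀ s ∈ Icc t r, U (t - s) = u 0 := fun s hs =>
    IccExtend_of_le_left hr _ (by linarith [hs.1])
  have hk_left : IntervalIntegrable k volume 0 t :=
    hk.mono_set (uIcc_subset_uIcc_left (by rwa [uIcc_of_le hr]))
  have hk_right : IntervalIntegrable k volume t r :=
    hk.mono_set (uIcc_subset_uIcc_right (by rwa [uIcc_of_le hr]))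
  have htail : ∫ s in t..r, k s • (U (t - s) - u 0) = 0 := by
    refine intervalIntegral.integral_zero_ae (.of_forall fun s hs => ?_)
    rw [uIoc_of_le ht.2] at hs
    rw [hU_neg s (Ioc_subset_Icc_self hs), sub_self, smul_zero]
  calc causalConv k u t
      = ∫ s in (0 : ℝ)..t, k s • u (t - s) := by
        simpa [causalConv] using intervalIntegral.integral_comp_sub_left
          (fun s => k s • u (t - s)) (a := 0) (b := t) t
    _ = ∫ s in (0 : ℝ)..t, (k s • (U (t - s) - u 0) + k s • u 0) := by
        refine intervalIntegral.integral_congr fun s hs => ?_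
        rw [uIcc_of_le ht.1] at hs
        simp only [← smul_add, sub_add_cancel, hU_pos s hs]
    _ = (∫ s in (0 : ℝ)..t, k s • (U (t - s) - u 0)) + (∫ s in (0 : ℝ)..t, k s) • u 0 := by
        rw [intervalIntegral.integral_add (hk_left.smul_continuousOn (by fun_prop))
          (hk_left.smul_continuousOn continuousOn_const), intervalIntegral.integral_smul_const]
    _ = _ := by
        rw [← intervalIntegral.integral_add_adjacent_intervals (b := t) (c := r)
          (hk_left.smul_continuousOn (by fun_prop)) (hk_right.smul_continuousOn (by fun_prop)),
          htail, add_zero]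

lemma continuousOn_causalConv [CompleteSpace E] {r : ℝ} (hr : 0 ≤ r)
    (hk : IntervalIntegrable k volume 0 r) (hu : ContinuousOn u (Icc 0 r)) :
    ContinuousOn (causalConv k u) (Icc 0 r) := by
  set v : ℝ → E := fun s => IccExtend hr ((Icc 0 r).domRestrict u) s - u 0
  have hv : Continuous v :=
    (continuousOn_iff_continuous_domRestrict.1 hu).Icc_extend'.sub continuous_const
  obtain ⟨M, hM⟩ : ∃ M, ∀ s, ‖v s‖ ≤ M := by
    obtain ⟨M, hM⟩ := isCompact_Icc.exists_bound_of_continuousOn (hu.sub continuousOn_const)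
    exact ⟨M, fun s => hM _ (projIcc 0 r hr s).2⟩
  have hfixed : Continuous fun t => ∫ s in (0 : ℝ)..r, k s • v (t - s) := by
    refine intervalIntegral.continuous_of_dominated_interval (bound := fun s => ‖k s‖ * M)
      (fun t => ?_) (fun t => .of_forall fun s _ => ?_) (hk.norm.mul_const M)
      (.of_forall fun s _ => by fun_prop)
    · exact (hk.smul_continuousOn (g := fun s => v (t - s)) (by fun_prop)).def'.aestronglyMeasurable
    · rw [norm_smul]
      gcongr
      exact hM _
  have hprimitive : ContinuousOn (fun t => ∫ s in (0 : ℝ)..t, k s) (Icc 0 r) := by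
    rw [← uIcc_of_le hr]
    refine intervalIntegral.continuousOn_primitive_interval ?_
    rwa [← intervalIntegrable_iff']
  exact (hfixed.continuousOn.add (hprimitive.smul continuousOn_const)).congr
    fun t ht => causalConv_eq_integral_add hr hk hu ht

lemma integrable_indicator_sub_smul (ht : 0 ≤ t) (hk : IntervalIntegrable k volume 0 t)
    (hu : ContinuousOn u (Icc 0 t)) :
    Integrable (Function.uncurry fun s τ => (Icc 0 t).indicator k (s - τ) • u τ)
      ((volume.restrict (Ioc 0 t)).prod (volume.restrict (Ioc 0 t))) := by
  have hk' : Integrable ((Icc 0 t).indicator k) volume :=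
    (integrable_indicator_iff measurableSet_Icc).2
      ((intervalIntegrable_iff_integrableOn_Icc_of_le ht).1 hk)
  have hu' : IntegrableOn u (Ioc 0 t) := hu.integrableOn_Icc.mono_set Ioc_subset_Icc_self
  have hconv := hu'.convolution_integrand (ContinuousLinearMap.lsmul ℝ ℝ (E := E)).flip hk'
  exact hconv.mono_measure (Measure.prod_mono Measure.restrict_le_self le_rfl)

lemma integral_causalConv [CompleteSpace E] (ht : 0 ≤ t) (hk : IntervalIntegrable k volume 0 t)
    (hu : ContinuousOn u (Icc 0 t)) :
    ∫ s in (0 : ℝ)..t, causalConv k u s = causalConv (fun s => ∫ τ in (0 : ℝ)..s, k τ) u t := by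
  have hinner : ∀ s ∈ Ioc 0 t,
      ∫ τ in Ioc 0 t, (Icc 0 t).indicator k (s - τ) • u τ = causalConv k u s := by
    intro s hs
    have hind : EqOn (fun τ => (Icc 0 t).indicator k (s - τ) • u τ)
        ((Ioc 0 s).indicator fun τ => k (s - τ) • u τ) (Ioc 0 t) := by
      intro τ hτ
      have hmem : s - τ ∈ Icc 0 t ↔ τ ∈ Ioc 0 s := by grind
      simp only [indicator_apply, hmem]
      split_ifs <;> simp
    rw [setIntegral_congr_fun measurableSet_Ioc hind, setIntegral_indicator measurableSet_Ioc,
      inter_eq_right.2 (Ioc_subset_Ioc_right hs.2), causalConv,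
      intervalIntegral.integral_of_le hs.1.le]
  have houter : ∀ τ ∈ Ioc 0 t, ∫ s in Ioc 0 t, (Icc 0 t).indicator k (s - τ) • u τ
      = (∫ s in (0 : ℝ)..(t - τ), k s) • u τ := by
    intro τ hτ
    have hind : EqOn (fun s => (Icc 0 t).indicator k (s - τ))
        ((Icc τ t).indicator fun s => k (s - τ)) (Ioc 0 t) := by
      intro s hs
      have hmem : s - τ ∈ Icc 0 t ↔ s ∈ Icc τ t := by grind
      simp only [indicator_apply, hmem]
    rw [integral_smul_const, setIntegral_congr_fun measurableSet_Ioc hind,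
      setIntegral_indicator measurableSet_Icc,
      inter_eq_right.2 (show Icc τ t ⊆ Ioc 0 t from Icc_subset_Ioc hτ.1 le_rfl),
      integral_Icc_eq_integral_Ioc,
      ← intervalIntegral.integral_of_le hτ.2, intervalIntegral.integral_comp_sub_right k,
      sub_self]
  calc ∫ s in (0 : ℝ)..t, causalConv k u s
      = ∫ s in Ioc 0 t, ∫ τ in Ioc 0 t, (Icc 0 t).indicator k (s - τ) • u τ := by
        rw [intervalIntegral.integral_of_le ht, setIntegral_congr_fun measurableSet_Ioc hinner]
    _ = ∫ τ in Ioc 0 t, ∫ s in Ioc 0 t, (Icc 0 t).indicator k (s - τ) • u τ :=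
        integral_integral_swap (integrable_indicator_sub_smul ht hk hu)
    _ = causalConv (fun s => ∫ τ in (0 : ℝ)..s, k τ) u t := by
        rw [setIntegral_congr_fun measurableSet_Ioc houter, causalConv,
          intervalIntegral.integral_of_le ht]

end CausalConvolution

section StronglyContinuousFamily

variable {𝕜 E F Y : Type*} [NontriviallyNormedField 𝕜] [NormedAddCommGroup E] [NormedSpace 𝕜 E]
  [CompleteSpace E] [NormedAddCommGroup F] [NormedSpace 𝕜 F] [TopologicalSpace Y]
  {T : Y → E →L[𝕜] F} {K : Set Y}

lemma exists_opNorm_le_of_strongly_continuousOn (hK : IsCompact K)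
    (hT : ∀ x, ContinuousOn (fun y => T y x) K) : ∃ M, 0 ≤ M ∧ ∀ y ∈ K, ‖T y‖ ≤ M := by
  obtain ⟨M, hM⟩ := banach_steinhaus (g := fun y : K => T y) fun x => by
    obtain ⟨C, hC⟩ := hK.exists_bound_of_continuousOn (hT x)
    exact ⟨C, fun y => hC y y.2⟩
  exact ⟨max M 0, le_max_right _ _, fun y hy => (hM ⟨y, hy⟩).trans (le_max_left _ _)⟩

lemma continuousOn_apply_of_strongly_continuousOn (hK : IsCompact K)
    (hT : ∀ x, ContinuousOn (fun y => T y x) K) {Z : Type*} [TopologicalSpace Z] {s : Set Z}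
    {a : Z → Y} {h : Z → E} (ha : ContinuousOn a s) (ha_maps : MapsTo a s K)
    (hh : ContinuousOn h s) : ContinuousOn (fun z => T (a z) (h z)) s := by
  obtain ⟨M, -, hM⟩ := exists_opNorm_le_of_strongly_continuousOn hK hT
  intro z₀ hz₀
  have happly : ContinuousWithinAt (fun z => T (a z) (h z₀)) s z₀ :=
    (hT (h z₀)).comp ha ha_maps z₀ hz₀
  have hbound : Tendsto (fun z => M * ‖h z - h z₀‖ + ‖T (a z) (h z₀) - T (a z₀) (h z₀)‖)
      (𝓝[s] z₀) (𝓝 0) := by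
    have := ((hh z₀ hz₀).sub_const (h z₀)).norm.const_mul M |>.add
      (happly.sub_const (T (a z₀) (h z₀))).norm
    simpa using this
  refine tendsto_iff_norm_sub_tendsto_zero.2 <|
    squeeze_zero' (.of_forall fun _ => norm_nonneg _) ?_ hbound
  filter_upwards [self_mem_nhdsWithin] with z hz
  calc ‖T (a z) (h z) - T (a z₀) (h z₀)‖
      = ‖T (a z) (h z - h z₀) + (T (a z) (h z₀) - T (a z₀) (h z₀))‖ := by
        rw [map_sub, sub_add_sub_cancel]
    _ ≤ M * ‖h z - h z₀‖ + ‖T (a z) (h z₀) - T (a z₀) (h z₀)‖ := by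
        refine (norm_add_le _ _).trans ?_
        gcongr
        exact (T (a z)).le_of_opNorm_le (hM _ (ha_maps hz)) _

end StronglyContinuousFamily

section Operators

variable {X : Type*} [NormedAddCommGroup X] [NormedSpace ℂ X] [CompleteSpace X]
  {S : ℝ → X →L[ℂ] X} {k : ℝ → ℝ} {t : ℝ}

lemma exists_clm_eq_causalConv (ht : 0 ≤ t) (hk : IntervalIntegrable k volume 0 t)
    (hS : ∀ x, ContinuousOn (fun s => S s x) (Icc 0 t)) :
    ∃ Q : X →L[ℂ] X, ∀ x, Q x = causalConv k (fun s => S s x) t := by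
  obtain ⟨M, -, hM⟩ := exists_opNorm_le_of_strongly_continuousOn isCompact_Icc hS
  have hint := fun x => intervalIntegrable_causalConv_integrand ht hk (hS x)
  let Q : X →ₗ[ℂ] X :=
    { toFun := fun x => causalConv k (fun s => S s x) t
      map_add' := fun x y => by
        simp only [causalConv, map_add, smul_add]
        exact intervalIntegral.integral_add (hint x) (hint y)
      map_smul' := fun c x => by
        simp only [causalConv, map_smul, RingHom.id_apply, ← intervalIntegral.integral_smul,
          smul_comm c] }
  refine ⟨Q.mkContinuous ((∫ s in (0 : ℝ)..t, ‖k s‖) * M) fun x => ?_, fun x => rfl⟩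
  rw [mul_assoc]
  exact norm_causalConv_le ht hk fun s hs => (S s).le_of_opNorm_le (hM s hs) x

lemma intervalIntegral_mem_of_isClosed {N : Submodule ℂ X} (hN : IsClosed (N : Set X))
    {φ : ℝ → X} {a b : ℝ} (hφ : IntervalIntegrable φ volume a b) (h : ∀ s ∈ uIcc a b, φ s ∈ N) :
    ∫ s in a..b, φ s ∈ N := by
  have : IsClosed (N : Set X) := hN
  rw [← Submodule.Quotient.mk_eq_zero]
  calc N.mkQL (∫ s in a..b, φ s) = ∫ s in a..b, N.mkQL (φ s) :=
        (N.mkQL.intervalIntegral_comp_comm hφ).symm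
    _ = 0 := (intervalIntegral.integral_congr fun s hs =>
        (Submodule.Quotient.mk_eq_zero N).2 (h s hs)).trans intervalIntegral.integral_zero

variable {A : X →ₗ.[ℂ] X}

lemma causalConv_mem_graph (hA : IsClosed (A.graph : Set (X × X))) (ht : 0 ≤ t)
    (hk : IntervalIntegrable k volume 0 t) {u v : ℝ → X} (hu : ContinuousOn u (Icc 0 t))
    (hv : ContinuousOn v (Icc 0 t)) (huv : ∀ s ∈ Icc 0 t, (u s, v s) ∈ A.graph) :
    (causalConv k u t, causalConv k v t) ∈ A.graph := by
  have hint := intervalIntegrable_causalConv_integrand ht hk (hu.prodMk hv)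
  have hmem : causalConv k (fun s => (u s, v s)) t ∈ A.graph := by
    refine intervalIntegral_mem_of_isClosed hA hint fun s hs => ?_
    rw [uIcc_of_le ht] at hs
    simpa only [Complex.coe_smul] using A.graph.smul_mem (k (t - s) : ℂ) (huv s hs)
  have hpair : causalConv k (fun s => (u s, v s)) t = (causalConv k u t, causalConv k v t) :=
    Prod.ext ((ContinuousLinearMap.fst ℂ X X).intervalIntegral_comp_comm hint).symm
      ((ContinuousLinearMap.snd ℂ X X).intervalIntegral_comp_comm hint).symm
  rwa [← hpair]

lemma causalConv_resolvent_mem_graph (hA : IsClosed (A.graph : Set (X × X)))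
    (hA_dense : Dense (A.domain : Set X)) (ht : 0 ≤ t) (hk : IntervalIntegrable k volume 0 t)
    (hS : ∀ x, ContinuousOn (fun s => S s x) (Icc 0 t))
    (hS_comm : ∀ s ∈ Icc 0 t, ∀ x y, (x, y) ∈ A.graph → (S s x, S s y) ∈ A.graph)
    (hS_eq : ∀ x y, (x, y) ∈ A.graph → S t x = x + causalConv k (fun s => S s y) t) (x : X) :
    (causalConv k (fun s => S s x) t, S t x - x) ∈ A.graph := by
  obtain ⟨Q, hQ⟩ := exists_clm_eq_causalConv ht hk hS
  rw [← hQ]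
  refine hA_dense.induction (P := fun x => (Q x, S t x - x) ∈ A.graph) (fun x hx => ?_)
    (hA.preimage (by fun_prop)) x
  have hxy : (x, A ⟨x, hx⟩) ∈ A.graph := A.mem_graph ⟨x, hx⟩
  rw [hS_eq x _ hxy, add_sub_cancel_left, hQ]
  exact causalConv_mem_graph hA ht hk (hS x) (hS _) fun s hs => hS_comm s hs x _ hxy

end Operators

section Grid

/-- The `i`-th node of the partition of `[0, t]` into `n` intervals of equal length; all nodes are
`0` for the junk value `n = 0`. -/
noncomputable def gridPoint (t : ℝ) (n i : ℕ) : ℝ := t * i / n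

variable {t : ℝ} {n m i : ℕ}

@[simp]
lemma gridPoint_zero_right (t : ℝ) (n : ℕ) : gridPoint t n 0 = 0 := by simp [gridPoint]

lemma gridPoint_zero_left (n i : ℕ) : gridPoint 0 n i = 0 := by simp [gridPoint]

lemma gridPoint_self (t : ℝ) (hn : n ≠ 0) : gridPoint t n n = t := by
  rw [gridPoint, mul_div_cancel_right₀ _ (by exact_mod_cast hn)]

lemma gridPoint_mul_mul_right (t : ℝ) (n i : ℕ) (hm : m ≠ 0) :
    gridPoint t (n * m) (i * m) = gridPoint t n i := by
  have : (m : ℝ) ≠ 0 := by exact_mod_cast hm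
  simp only [gridPoint, Nat.cast_mul]
  rw [← mul_assoc, mul_div_mul_right _ _ this]

lemma gridPoint_succ (t : ℝ) (n i : ℕ) : gridPoint t n (i + 1) = gridPoint t n i + t / n := by
  simp only [gridPoint, Nat.cast_add, Nat.cast_one]
  ring

lemma gridPoint_mono (ht : 0 ≤ t) (n : ℕ) : Monotone (gridPoint t n) := fun i j hij => by
  unfold gridPoint
  gcongr

lemma gridPoint_mem_Icc (ht : 0 ≤ t) (hi : i ≤ n) : gridPoint t n i ∈ Icc 0 t := by
  refine ⟨gridPoint_zero_right t n ▸ gridPoint_mono ht n i.zero_le, ?_⟩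
  rcases eq_or_ne n 0 with rfl | hn
  · simpa [gridPoint] using ht
  · exact (gridPoint_mono ht n hi).trans_eq (gridPoint_self t hn)

lemma continuous_gridPoint (n i : ℕ) : Continuous fun t => gridPoint t n i := by
  unfold gridPoint
  fun_prop

lemma abs_gridPoint_div_sub_le (ht : 0 ≤ t) (n j : ℕ) (hm : m ≠ 0) :
    |gridPoint t n (j / m) - gridPoint t (n * m) j| ≤ t / n := by
  have hlower : gridPoint t n (j / m) ≤ gridPoint t (n * m) j := by
    rw [← gridPoint_mul_mul_right t n _ hm]
    exact gridPoint_mono ht _ (Nat.div_mul_le_self j m)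
  have hupper : gridPoint t (n * m) j ≤ gridPoint t n (j / m) + t / n := by
    rw [← gridPoint_succ, ← gridPoint_mul_mul_right t n _ hm, mul_comm (j / m + 1)]
    exact gridPoint_mono ht _ (Nat.lt_mul_div_succ j (Nat.pos_of_ne_zero hm)).le
  rw [abs_sub_comm, abs_of_nonneg (sub_nonneg.2 hlower)]
  linarith

lemma abs_sub_gridPoint_le {s : ℝ} (hs : s ∈ Icc (gridPoint t n i) (gridPoint t n (i + 1))) :
    |gridPoint t n i - s| ≤ t / n := by
  rw [gridPoint_succ] at hs
  rw [abs_sub_comm, abs_of_nonneg (sub_nonneg.2 hs.1)]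
  linarith [hs.2]

lemma eventually_norm_sub_le_of_abs_sub_le_div {E : Type*} [NormedAddCommGroup E] {f : ℝ → E}
    {r : ℝ} (hf : ContinuousOn f (Icc 0 r)) {ε : ℝ} (hε : 0 < ε) :
    ∀ᶠ n : ℕ in atTop, ∀ a ∈ Icc 0 r, ∀ b ∈ Icc 0 r, |a - b| ≤ r / n → ‖f a - f b‖ ≤ ε := by
  obtain ⟨δ, hδ, hfδ⟩ := Metric.uniformContinuousOn_iff.1
    (isCompact_Icc.uniformContinuousOn_of_continuous hf) ε hε
  filter_upwards [(tendsto_const_div_atTop_nhds_zero_nat r).eventually_lt_const hδ]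
    with n hn a ha b hb hab
  rw [← dist_eq_norm]
  exact (hfδ a ha b hb (hab.trans_lt hn)).le

end Grid

section StieltjesSum

variable {X : Type*} [NormedAddCommGroup X] [NormedSpace ℂ X] {G : ℝ → X →L[ℂ] X}
  {r : ℝ} {m : ℕ}

-- A partition of `[0, d n]` is completed to one of `[0, r]`, with the zero vector on the last step.
lemma BoundedSemivariation.exists_norm_sum_le (hG : BoundedSemivariation G r) :
    ∃ C, 0 ≤ C ∧ ∀ (n : ℕ) (d : ℕ → ℝ) (x : ℕ → X), d 0 = 0 → d n ≤ r →
      (∀ i < n, d i < d (i + 1)) → (∀ i < n, ‖x i‖ ≤ 1) →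
      ‖∑ i ∈ Finset.range n, (G (d (i + 1)) - G (d i)) (x i)‖ ≤ C := by
  obtain ⟨C, hC⟩ := hG
  refine ⟨max C 0, le_max_right _ _, fun n d x hd0 hdn hd hx => le_max_of_le_left ?_⟩
  let y : ℕ → X := fun i => if i < n then x i else 0
  have hy : ∀ i, ‖y i‖ ≤ 1 := fun i => by
    by_cases hi : i < n
    · simpa only [y, if_pos hi] using hx i hi
    · simp [y, hi]
  have hxy : ∀ i ∈ Finset.range n, x i = y i := fun i hi => by
    simp only [y, if_pos (Finset.mem_range.1 hi)]
  rw [Finset.sum_congr rfl fun i hi => by rw [hxy i hi]]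
  rcases hdn.eq_or_lt with hdn | hdn
  · exact hC n d y hd0 hdn hd hy
  · let e : ℕ → ℝ := fun i => if i ≤ n then d i else r
    have he : ∀ i < n + 1, e i < e (i + 1) := by grind
    have hsum := hC (n + 1) e y (by simpa [e]) (by simp [e]) he hy
    rw [Finset.sum_range_succ, show y n = 0 by simp [y], map_zero, add_zero] at hsum
    rwa [Finset.sum_congr rfl fun i hi => ?_]
    have hi := Finset.mem_range.1 hi
    simp only [e, if_pos hi.le, if_pos (Nat.succ_le_of_lt hi)]

lemma BoundedSemivariation.exists_norm_grid_sum_le (hG : BoundedSemivariation G r) :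
    ∃ C, 0 ≤ C ∧ ∀ t ∈ Icc 0 r, ∀ (n : ℕ) (ε : ℝ), 0 < ε → ∀ x : ℕ → X, (∀ i < n, ‖x i‖ ≤ ε) →
      ‖∑ i ∈ Finset.range n, (G (gridPoint t n (i + 1)) - G (gridPoint t n i)) (x i)‖
        ≤ C * ε := by
  obtain ⟨C, hC0, hC⟩ := hG.exists_norm_sum_le
  refine ⟨C, hC0, fun t ht n ε hε x hx => ?_⟩
  rcases ht.1.eq_or_lt with rfl | ht0
  · simpa only [gridPoint_zero_left, sub_self, zero_apply, Finset.sum_const_zero,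
      norm_zero] using by positivity
  have hscale : ∀ i < n, ‖(ε : ℂ)⁻¹ • x i‖ ≤ 1 := fun i hi => by
    rw [norm_smul, norm_inv, Complex.norm_of_nonneg hε.le, inv_mul_le_one₀ hε]
    exact hx i hi
  have hgrid : ∀ i < n, gridPoint t n i < gridPoint t n (i + 1) := fun i hi => by
    have hn : (0 : ℝ) < n := by exact_mod_cast i.zero_le.trans_lt hi
    rw [gridPoint_succ]
    linarith [div_pos ht0 hn]
  have hsum := hC n (gridPoint t n) _ (by simp) ((gridPoint_mem_Icc ht.1 le_rfl).2.trans ht.2)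
    hgrid hscale
  simp only [map_smul, ← Finset.smul_sum] at hsum
  rwa [norm_smul, norm_inv, Complex.norm_of_nonneg hε.le, inv_mul_le_iff₀ hε, mul_comm] at hsum

/-- The left-endpoint Riemann–Stieltjes sum of `∫₀ᵗ dG(s) h(s)` over the partition of `[0, t]`
into `n` equal intervals. -/
noncomputable def stieltjesSum (G : ℝ → X →L[ℂ] X) (h : ℝ → X) (t : ℝ) (n : ℕ) : X :=
  ∑ i ∈ Finset.range n,
    (G (gridPoint t n (i + 1)) - G (gridPoint t n i)) (h (gridPoint t n i))

lemma sum_range_mul_sub_apply_div {E F : Type*} [AddCommGroup E] [AddCommGroup F] (T : ℕ → E →+ F)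
    (z : ℕ → E) (n : ℕ) (hm : m ≠ 0) :
    ∑ j ∈ Finset.range (n * m), (T (j + 1) - T j) (z (j / m))
      = ∑ i ∈ Finset.range n, (T ((i + 1) * m) - T (i * m)) (z i) := by
  induction n with
  | zero => simp
  | succ n ih =>
    have hdiv : ∀ l ∈ Finset.range m, (n * m + l) / m = n := fun l hl => by
      rw [mul_comm, Nat.mul_add_div (Nat.pos_of_ne_zero hm),
        Nat.div_eq_of_lt (Finset.mem_range.1 hl), add_zero]
    have hblock : ∑ l ∈ Finset.range m,
        (T (n * m + l + 1) - T (n * m + l)) (z ((n * m + l) / m))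
          = (T ((n + 1) * m) - T (n * m)) (z n) := by
      rw [Finset.sum_congr rfl fun l hl => by rw [hdiv l hl], ← AddMonoidHom.finsetSum_apply]
      simp only [add_assoc, Finset.sum_range_sub (fun l => T (n * m + l)), add_zero, add_mul,
        one_mul]
    rw [Nat.succ_mul, Finset.sum_range_add, ih, Finset.sum_range_succ, hblock]

lemma stieltjesSum_eq_sum_refined (G : ℝ → X →L[ℂ] X) (h : ℝ → X) (t : ℝ) (n : ℕ) (hm : m ≠ 0) :
    stieltjesSum G h t n = ∑ j ∈ Finset.range (n * m),
      (G (gridPoint t (n * m) (j + 1)) - G (gridPoint t (n * m) j))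
        (h (gridPoint t n (j / m))) := by
  have := sum_range_mul_sub_apply_div (fun j => (G (gridPoint t (n * m) j) : X →+ X))
    (fun i => h (gridPoint t n i)) n hm
  simp only [gridPoint_mul_mul_right t n _ hm] at this
  exact this.symm

lemma BoundedSemivariation.exists_norm_stieltjesSum_sub_le (hG : BoundedSemivariation G r) :
    ∃ C, 0 ≤ C ∧ ∀ t ∈ Icc 0 r, ∀ (h : ℝ → X) (n m : ℕ) (ε : ℝ), m ≠ 0 → 0 < ε →
      (∀ a ∈ Icc 0 t, ∀ b ∈ Icc 0 t, |a - b| ≤ t / n → ‖h a - h b‖ ≤ ε) →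
      ‖stieltjesSum G h t n - stieltjesSum G h t (n * m)‖ ≤ C * ε := by
  obtain ⟨C, hC0, hC⟩ := hG.exists_norm_grid_sum_le
  refine ⟨C, hC0, fun t ht h n m ε hm hε hosc => ?_⟩
  rw [stieltjesSum_eq_sum_refined G h t n hm, stieltjesSum, ← Finset.sum_sub_distrib]
  simp only [← map_sub]
  refine hC t ht (n * m) ε hε _ fun j hj => ?_
  have hj_div : j / m ≤ n := (Nat.div_lt_of_lt_mul (by rwa [mul_comm] at hj)).le
  exact hosc _ (gridPoint_mem_Icc ht.1 hj_div) _ (gridPoint_mem_Icc ht.1 hj.le)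
    (abs_gridPoint_div_sub_le ht.1 n j hm)

lemma BoundedSemivariation.uniformCauchySeqOn_stieltjesSum (hG : BoundedSemivariation G r)
    {f : ℝ → X} (hf : ContinuousOn f (Icc 0 r)) :
    UniformCauchySeqOn (fun n t => stieltjesSum G (fun s => f (t - s)) t n) atTop (Icc 0 r) := by
  obtain ⟨C, hC0, hC⟩ := hG.exists_norm_stieltjesSum_sub_le
  rw [Metric.uniformCauchySeqOn_iff]
  intro ε hε
  set η := ε / (2 * C + 1) with hη
  have hη_pos : 0 < η := by positivity
  obtain ⟨N, hN⟩ := eventually_atTop.1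
    ((eventually_norm_sub_le_of_abs_sub_le_div hf hη_pos).and (eventually_ne_atTop 0))
  refine ⟨N, fun m hm n hn t ht => ?_⟩
  have hrefine : ∀ n ≥ N, ∀ m ≠ 0, ‖stieltjesSum G (fun s => f (t - s)) t n -
      stieltjesSum G (fun s => f (t - s)) t (n * m)‖ ≤ C * η := by
    intro n hn m hm
    refine hC t ht _ n m η hm hη_pos fun a ha b hb hab => (hN n hn).1 _ ?_ _ ?_ ?_
    · exact ⟨by linarith [ha.2], by linarith [ha.1, ht.2]⟩
    · exact ⟨by linarith [hb.2], by linarith [hb.1, ht.2]⟩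
    · rw [sub_sub_sub_cancel_left, abs_sub_comm]
      exact hab.trans (by gcongr; exact ht.2)
  have hmn := hrefine m hm n (hN n hn).2
  have hnm := hrefine n hn m (hN m hm).2
  rw [mul_comm n m, norm_sub_rev] at hnm
  rw [dist_eq_norm]
  calc ‖stieltjesSum G (fun s => f (t - s)) t m - stieltjesSum G (fun s => f (t - s)) t n‖
      ≤ C * η + C * η := (norm_sub_le_norm_sub_add_norm_sub _ _ _).trans (add_le_add hmn hnm)
    _ < (2 * C + 1) * η := by linarith
    _ = ε := by rw [hη]; field_simp

lemma continuousOn_stieltjesSum [CompleteSpace X]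
    (hG : ∀ x, ContinuousOn (fun s => G s x) (Icc 0 r)) {f : ℝ → X}
    (hf : ContinuousOn f (Icc 0 r)) (n : ℕ) :
    ContinuousOn (fun t => stieltjesSum G (fun s => f (t - s)) t n) (Icc 0 r) := by
  have hmaps : ∀ i ≤ n, MapsTo (fun t => gridPoint t n i) (Icc 0 r) (Icc 0 r) := fun i hi t ht =>
    Icc_subset_Icc_right ht.2 (gridPoint_mem_Icc ht.1 hi)
  refine continuousOn_finsetSum _ fun i hi => ?_
  have hi := Finset.mem_range.1 hi
  have hfi : ContinuousOn (fun t => f (t - gridPoint t n i)) (Icc 0 r) := by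
    refine hf.comp (continuous_id.sub (continuous_gridPoint n i)).continuousOn fun t ht => ?_
    have := gridPoint_mem_Icc ht.1 hi.le
    exact ⟨sub_nonneg.2 this.2, (sub_le_self _ this.1).trans ht.2⟩
  have hGi : ∀ j ≤ n,
      ContinuousOn (fun t => G (gridPoint t n j) (f (t - gridPoint t n i))) (Icc 0 r) :=
    fun j hj => continuousOn_apply_of_strongly_continuousOn isCompact_Icc hG
      (continuous_gridPoint n j).continuousOn (hmaps j hj) hfi
  exact (hGi (i + 1) hi).sub (hGi i hi.le)

end StieltjesSum

section RiemannSum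

variable {𝕜 E F : Type*} [NontriviallyNormedField 𝕜] [NormedAddCommGroup E] [NormedSpace 𝕜 E]
  [CompleteSpace E] [NormedAddCommGroup F] [NormedSpace ℝ F] [NormedSpace 𝕜 F]
  {P : ℝ → E →L[𝕜] F} {h : ℝ → E} {t : ℝ}

lemma norm_integral_apply_const_sub_integral_apply_le {a b M ε : ℝ} {c : E}
    (hP : ∀ x, ContinuousOn (fun s => P s x) (uIcc a b)) (hh : ContinuousOn h (uIcc a b))
    (hM : ∀ s ∈ uIcc a b, ‖P s‖ ≤ M) (hc : ∀ s ∈ uIcc a b, ‖c - h s‖ ≤ ε) :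
    ‖(∫ s in a..b, P s c) - ∫ s in a..b, P s (h s)‖ ≤ M * ε * |b - a| := by
  have hPh : ContinuousOn (fun s => P s (h s)) (uIcc a b) :=
    continuousOn_apply_of_strongly_continuousOn isCompact_uIcc hP continuousOn_id (mapsTo_id _) hh
  rw [← intervalIntegral.integral_sub (hP c).intervalIntegrable hPh.intervalIntegrable]
  refine intervalIntegral.norm_integral_le_of_norm_le_const fun s hs => ?_
  have hs := uIoc_subset_uIcc hs
  rw [← map_sub]
  exact (P s).le_of_opNorm_le_of_le (hM s hs) (hc s hs)

lemma norm_sum_integral_gridPoint_sub_le (ht : 0 ≤ t)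
    (hP : ∀ x, ContinuousOn (fun s => P s x) (Icc 0 t)) (hh : ContinuousOn h (Icc 0 t))
    {M ε : ℝ} (hM : ∀ s ∈ Icc 0 t, ‖P s‖ ≤ M) {n : ℕ} (hn : n ≠ 0)
    (hosc : ∀ a ∈ Icc 0 t, ∀ b ∈ Icc 0 t, |a - b| ≤ t / n → ‖h a - h b‖ ≤ ε) :
    ‖(∑ i ∈ Finset.range n, ∫ s in gridPoint t n i..gridPoint t n (i + 1),
      P s (h (gridPoint t n i))) - ∫ s in (0 : ℝ)..t, P s (h s)‖ ≤ M * ε * t := by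
  have hPh : ContinuousOn (fun s => P s (h s)) (Icc 0 t) :=
    continuousOn_apply_of_strongly_continuousOn isCompact_Icc hP continuousOn_id (mapsTo_id _) hh
  have hcell_subset : ∀ i < n, uIcc (gridPoint t n i) (gridPoint t n (i + 1)) ⊆ Icc 0 t :=
    fun i hi => uIcc_subset_Icc (gridPoint_mem_Icc ht hi.le) (gridPoint_mem_Icc ht hi)
  have hsplit : ∫ s in (0 : ℝ)..t, P s (h s) = ∑ i ∈ Finset.range n,
      ∫ s in gridPoint t n i..gridPoint t n (i + 1), P s (h s) := by
    rw [intervalIntegral.sum_integral_adjacent_intervals fun i hi =>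
      (hPh.mono (hcell_subset i hi)).intervalIntegrable, gridPoint_zero_right, gridPoint_self t hn]
  have hcell : ∀ i ∈ Finset.range n,
      ‖(∫ s in gridPoint t n i..gridPoint t n (i + 1), P s (h (gridPoint t n i)))
        - ∫ s in gridPoint t n i..gridPoint t n (i + 1), P s (h s)‖ ≤ M * ε * (t / n) := by
    intro i hi
    have hi := Finset.mem_range.1 hi
    have hsub := hcell_subset i hi
    have hlen : |gridPoint t n (i + 1) - gridPoint t n i| = t / n := by
      rw [gridPoint_succ, add_sub_cancel_left, abs_of_nonneg (by positivity)]
    rw [← hlen]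
    refine norm_integral_apply_const_sub_integral_apply_le (fun x => (hP x).mono hsub)
      (hh.mono hsub) (fun s hs => hM s (hsub hs)) fun s hs => ?_
    refine hosc _ (gridPoint_mem_Icc ht hi.le) s (hsub hs) (abs_sub_gridPoint_le ?_)
    rwa [uIcc_of_le (gridPoint_mono ht n i.le_succ)] at hs
  calc _ ≤ ∑ _i ∈ Finset.range n, M * ε * (t / n) := by
        rw [hsplit, ← Finset.sum_sub_distrib]
        exact norm_sum_le_of_le _ hcell
    _ = M * ε * t := by
        rw [Finset.sum_const, Finset.card_range, nsmul_eq_mul]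
        field_simp

lemma tendsto_sum_integral_gridPoint (ht : 0 ≤ t)
    (hP : ∀ x, ContinuousOn (fun s => P s x) (Icc 0 t)) (hh : ContinuousOn h (Icc 0 t)) :
    Tendsto (fun n : ℕ => ∑ i ∈ Finset.range n,
      ∫ s in gridPoint t n i..gridPoint t n (i + 1), P s (h (gridPoint t n i)))
      atTop (𝓝 (∫ s in (0 : ℝ)..t, P s (h s))) := by
  obtain ⟨M, hM0, hM⟩ := exists_opNorm_le_of_strongly_continuousOn isCompact_Icc hP
  rw [Metric.tendsto_nhds]
  intro ε hε
  set η := ε / (M * t + 1) with hη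
  have hη_pos : 0 < η := by positivity
  filter_upwards [eventually_norm_sub_le_of_abs_sub_le_div hh hη_pos, eventually_ne_atTop 0]
    with n hosc hn
  rw [dist_eq_norm]
  calc _ ≤ M * η * t := norm_sum_integral_gridPoint_sub_le ht hP hh hM hn hosc
    _ < (M * t + 1) * η := by linarith
    _ = ε := by rw [hη]; field_simp

end RiemannSum

section ClosedOperator

variable {X : Type*} [NormedAddCommGroup X] [NormedSpace ℂ X] {A : X →ₗ.[ℂ] X}
  {P S : ℝ → X →L[ℂ] X}

lemma sum_integral_stieltjesSum_mem_graph {h : ℝ → X} {t : ℝ} (ht : 0 ≤ t)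
    (hP : ∀ x, ContinuousOn (fun s => P s x) (Icc 0 t))
    (hPS : ∀ a ∈ Icc 0 t, ∀ x, (∫ s in (0 : ℝ)..a, P s x, S a x - x) ∈ A.graph) (n : ℕ) :
    (∑ i ∈ Finset.range n, ∫ s in gridPoint t n i..gridPoint t n (i + 1),
      P s (h (gridPoint t n i)), stieltjesSum S h t n) ∈ A.graph := by
  have hint : ∀ a ∈ Icc 0 t, ∀ x, IntervalIntegrable (fun s => P s x) volume 0 a :=
    fun a ha x => ((hP x).mono (uIcc_subset_Icc ⟨le_rfl, ht⟩ ha)).intervalIntegrable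
  have hincrement : ∀ a ∈ Icc 0 t, ∀ b ∈ Icc 0 t, ∀ x,
      (∫ s in a..b, P s x, (S b - S a) x) ∈ A.graph := by
    intro a ha b hb x
    have := A.graph.sub_mem (hPS b hb x) (hPS a ha x)
    rwa [Prod.mk_sub_mk, sub_sub_sub_cancel_right,
      intervalIntegral.integral_interval_sub_left (hint b hb x) (hint a ha x)] at this
  rw [stieltjesSum, prod_mk_sum]
  exact A.graph.sum_mem fun i hi =>
    have hi := Finset.mem_range.1 hi
    hincrement _ (gridPoint_mem_Icc ht hi.le) _ (gridPoint_mem_Icc ht hi) _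

theorem exists_continuousOn_integral_mem_graph [CompleteSpace X]
    (hA : IsClosed (A.graph : Set (X × X))) {r : ℝ}
    (hS : ∀ x, ContinuousOn (fun s => S s x) (Icc 0 r)) (hsv : BoundedSemivariation S r)
    (hP : ∀ x, ContinuousOn (fun s => P s x) (Icc 0 r))
    (hPS : ∀ a ∈ Icc 0 r, ∀ x, (∫ s in (0 : ℝ)..a, P s x, S a x - x) ∈ A.graph)
    {f : ℝ → X} (hf : ContinuousOn f (Icc 0 r)) :
    ∃ w : ℝ → X, ContinuousOn w (Icc 0 r) ∧
      ∀ t ∈ Icc 0 r, (∫ s in (0 : ℝ)..t, P (t - s) (f s), w t) ∈ A.graph := by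
  have hcauchy := hsv.uniformCauchySeqOn_stieltjesSum hf
  choose! w hw using fun t (ht : t ∈ Icc 0 r) =>
    cauchySeq_tendsto_of_complete (hcauchy.cauchySeq ht)
  have hw_cont : ContinuousOn w (Icc 0 r) :=
    (hcauchy.tendstoUniformlyOn_of_tendsto hw).continuousOn
      (.of_forall fun n => continuousOn_stieltjesSum hS hf n)
  refine ⟨w, hw_cont, fun t ht => ?_⟩
  have hsub : Icc 0 t ⊆ Icc 0 r := Icc_subset_Icc_right ht.2
  have hPt : ∀ x, ContinuousOn (fun s => P s x) (Icc 0 t) := fun x => (hP x).mono hsub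
  have hft : ContinuousOn (fun s => f (t - s)) (Icc 0 t) :=
    hf.comp (by fun_prop) fun s hs => hsub ⟨sub_nonneg.2 hs.2, sub_le_self _ hs.1⟩
  have hreflect : ∫ s in (0 : ℝ)..t, P (t - s) (f s) = ∫ s in (0 : ℝ)..t, P s (f (t - s)) := by
    simpa using intervalIntegral.integral_comp_sub_left (fun s => P s (f (t - s)))
      (a := 0) (b := t) t
  rw [hreflect]
  exact hA.mem_of_tendsto
    ((tendsto_sum_integral_gridPoint ht.1 hPt hft).prodMk_nhds (hw t ht))
    (.of_forall fun n => sum_integral_stieltjesSum_mem_graph (h := fun s => f (t - s)) ht.1 hPt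
      (fun a ha => hPS a (hsub ha)) n)

end ClosedOperator

section ResolventFamily

lemma intervalIntegrable_g {β : ℝ} (hβ : 0 < β) (a b : ℝ) :
    IntervalIntegrable (g β) volume a b :=
  (intervalIntegral.intervalIntegrable_rpow' (by linarith)).div_const _

lemma integral_g {β : ℝ} (hβ : 0 < β) (t : ℝ) : ∫ s in (0 : ℝ)..t, g β s = g (β + 1) t := by
  have hΓ := (Real.Gamma_pos_of_pos hβ).ne'
  simp only [g, intervalIntegral.integral_div, integral_rpow (Or.inl (by linarith : -1 < β - 1)),
    sub_add_cancel, add_sub_cancel_right, Real.zero_rpow hβ.ne', Real.Gamma_add_one hβ.ne']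
  field_simp
  simp

variable {X : Type*} [NormedAddCommGroup X] [NormedSpace ℂ X] {S : ℝ → X →L[ℂ] X} {α r t : ℝ}

lemma Pa_eq_causalConv (α : ℝ) (S : ℝ → X →L[ℂ] X) (t : ℝ) (x : X) :
    Pa α S t x = causalConv (g (α - 1)) (fun s => S s x) t := rfl

variable [CompleteSpace X]

lemma integral_Pa (hα : 1 < α) (ht : 0 ≤ t) {x : X}
    (hS : ContinuousOn (fun s => S s x) (Icc 0 t)) :
    ∫ s in (0 : ℝ)..t, Pa α S s x = causalConv (g α) (fun s => S s x) t := by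
  have hα' : 0 < α - 1 := sub_pos.2 hα
  simp only [Pa_eq_causalConv, integral_causalConv ht (intervalIntegrable_g hα' 0 t) hS,
    integral_g hα', sub_add_cancel]

lemma exists_strongly_continuousOn_clm_eq_Pa (hα : 1 < α)
    (hS : ∀ x, ContinuousOn (fun s => S s x) (Icc 0 r)) :
    ∃ P : ℝ → X →L[ℂ] X, (∀ x, ContinuousOn (fun t => P t x) (Icc 0 r)) ∧
      ∀ t ∈ Icc 0 r, ∀ x, P t x = Pa α S t x := by
  have hg : ∀ t, IntervalIntegrable (g (α - 1)) volume 0 t :=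
    intervalIntegrable_g (sub_pos.2 hα) 0
  choose! P hP using fun t (ht : t ∈ Icc 0 r) =>
    exists_clm_eq_causalConv ht.1 (hg t) fun x => (hS x).mono (Icc_subset_Icc_right ht.2)
  refine ⟨P, fun x t ht => ?_, hP⟩
  exact (continuousOn_causalConv (ht.1.trans ht.2) (hg r) (hS x)).congr
    (fun s hs => hP s hs x) t ht

theorem stmt_6_general (α : ℝ) (hα : 1 < α) (A : X →ₗ.[ℂ] X)
    (hA_closed : IsClosed (A.graph : Set (X × X))) (hA_dense : Dense (A.domain : Set X)) (r : ℝ)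
    (S : ℝ → X →L[ℂ] X) (hS_cont : ∀ x : X, ContinuousOn (fun t => S t x) (Icc 0 r))
    (hS_comm : ∀ t ∈ Icc 0 r, ∀ x y : X, (x, y) ∈ A.graph → (S t x, S t y) ∈ A.graph)
    (hS_eq : ∀ t ∈ Icc 0 r, ∀ x y : X, (x, y) ∈ A.graph →
      S t x = x + ∫ s in (0 : ℝ)..t, g α (t - s) • S s y)
    (hsv : BoundedSemivariation S r) (f : ℝ → X) (hf : ContinuousOn f (Icc 0 r)) :
    ∃ w : ℝ → X, ContinuousOn w (Icc 0 r) ∧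
      ∀ t ∈ Icc 0 r, (∫ s in (0 : ℝ)..t, Pa α S (t - s) (f s), w t) ∈ A.graph := by
  obtain ⟨P, hP_cont, hP⟩ := exists_strongly_continuousOn_clm_eq_Pa hα hS_cont
  have hPS : ∀ t ∈ Icc 0 r, ∀ x, (∫ s in (0 : ℝ)..t, P s x, S t x - x) ∈ A.graph := by
    intro t ht x
    have hsub : Icc 0 t ⊆ Icc 0 r := Icc_subset_Icc_right ht.2
    have hS_sub := fun x => (hS_cont x).mono hsub
    rw [intervalIntegral.integral_congr fun s hs => hP s (hsub (uIcc_of_le ht.1 ▸ hs)) x,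
      integral_Pa hα ht.1 (hS_sub x)]
    exact causalConv_resolvent_mem_graph hA_closed hA_dense ht.1
      (intervalIntegrable_g (zero_lt_one.trans hα) 0 t) hS_sub
      (fun s hs => hS_comm s (hsub hs)) (hS_eq t ht) x
  obtain ⟨w, hw_cont, hw⟩ :=
    exists_continuousOn_integral_mem_graph hA_closed hS_cont hsv hP_cont hPS hf
  refine ⟨w, hw_cont, fun t ht => ?_⟩
  have hPa : ∫ s in (0 : ℝ)..t, Pa α S (t - s) (f s) = ∫ s in (0 : ℝ)..t, P (t - s) (f s) := by
    refine intervalIntegral.integral_congr fun s hs => (hP (t - s) ?_ (f s)).symm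
    rw [uIcc_of_le ht.1] at hs
    exact ⟨sub_nonneg.2 hs.2, (sub_le_self t hs.1).trans ht.2⟩
  exact hPa ▸ hw t ht

end ResolventFamily

theorem stmt_6
    {X : Type*} [NormedAddCommGroup X] [NormedSpace ℂ X] [CompleteSpace X]
    (α : ℝ) (hα1 : 1 < α) (hα2 : α < 2)
    (A : X →ₗ.[ℂ] X) (hA_closed : IsClosed (A.graph : Set (X × X)))
    (hA_dense : Dense (A.domain : Set X))
    (S : ℝ → X →L[ℂ] X)
    (hS_cont : ∀ x : X, ContinuousOn (fun t => S t x) (Ici (0:ℝ)))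
    (hS_zero : S 0 = 1)
    (hS_dom : ∀ t : ℝ, 0 ≤ t → ∀ x ∈ A.domain, S t x ∈ A.domain)
    (hS_comm : ∀ t : ℝ, 0 ≤ t → ∀ x y : X, (x, y) ∈ A.graph → (S t x, S t y) ∈ A.graph)
    (hS_eq : ∀ t : ℝ, 0 ≤ t → ∀ x y : X, (x, y) ∈ A.graph →
      S t x = x + ∫ s in (0:ℝ)..t, g α (t - s) • S s y)
    (r : ℝ) (hr : 0 < r) (hsv : BoundedSemivariation S r)
    (f : ℝ → X) (hf : ContinuousOn f (Icc 0 r)) :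
    ∃ w : ℝ → X, ContinuousOn w (Icc 0 r) ∧
      ∀ t ∈ Icc (0:ℝ) r,
        ((∫ s in (0:ℝ)..t, Pa α S (t - s) (f s)), w t) ∈ A.graph := by
  exact stmt_6_general α hα1 A hA_closed hA_dense r S
    (fun x => (hS_cont x).mono Icc_subset_Ici_self) (fun t ht => hS_comm t ht.1)
    (fun t ht => hS_eq t ht.1) hsv f hf
end
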